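/- (Another q-Pascal identity) For every rational number α and every integer k ≥ 1, (1 − {α}_q)·(binom(α−1,k)_q + binom(α−1,k−1)_q) = (2 − q^k − {α−k}_q)·binom(α,k)_q in ℚ(q); equivalently, when α ≠ 0, binom(α−1,k)_q + binom(α−1,k−1)_q = ((2 − q^k − {α−k}_q)/(1 − {α}_q))·binom(α,k)_q. -/

import Mathlib

/-! Both parts follow from the shift rule `[α+1]_q = 1 + q[α]_q` for all rational `α`
(`qRat_add_one`). It gives `1 - {α}_q = (1-q)[α]_q` and
`2 - q^k - {α-k}_q = (1-q)([k]_q + [α-k]_q)`, while the product formula gives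
`[α]_q binom(α-1,k)_q = [α-k]_q binom(α,k)_q` and
`[α]_q binom(α-1,k-1)_q = [k]_q binom(α,k)_q`; adding these proves the first identity.

For the shift rule, adding `1` to `α > 1` only increases the first partial quotient by `1`.
Hence the normalisation by `⌊α⌋` in the definition of `qRat` may be replaced by any integer
translation bringing `α` above `1` (`qRat_eq`).

The divided form also needs `[α]_q ≠ 0` for `α ≠ 0`. This holds because `[α]_q` is regular at
`q = 1` with value `α` there (`qRat_spec`): the `q`-deformed continued fraction specialises to
the ordinary one, and all complete quotients met on the way are positive since the partial
quotients are. -/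

noncomputable section

open Finset

/-- The `q`-integer `[n]_q = 1 + q + ⋯ + q^{n-1}` as a rational function in `q`. -/
def qNum (n : ℕ) : RatFunc ℚ := ∑ i ∈ Finset.range n, RatFunc.X ^ i

/-- The `q⁻¹`-integer `[n]_{q⁻¹} = 1 + q⁻¹ + ⋯ + q^{-(n-1)}`. -/
def qNumInv (n : ℕ) : RatFunc ℚ := ∑ i ∈ Finset.range n, (RatFunc.X)⁻¹ ^ i

/-- The continued fraction expansion of `p/q` computed by the Euclidean algorithm. -/
def cfNat (p q : ℕ) : List ℕ :=
  if h : q = 0 then [] else (p / q) :: cfNat q (p % q)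
termination_by q
decreasing_by exact Nat.mod_lt _ (Nat.pos_of_ne_zero h)

/-- Turn a continued fraction expansion into one of even length,
replacing a final coefficient `aₙ` by `aₙ - 1, 1` if needed. -/
def evenize (l : List ℕ) : List ℕ :=
  if l.length % 2 = 0 then l else l.dropLast ++ [l.getLast! - 1, 1]

/-- Evaluation of the Morier-Genoud--Ovsienko `q`-deformed continued fraction
`[a₁]_q + q^{a₁}/([a₂]_{q⁻¹} + q^{-a₂}/([a₃]_q + ⋯ + q^{a_{2m-1}}/[a_{2m}]_{q⁻¹}))`.
The boolean records whether the current position is odd (`true`) or even (`false`).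
(The empty continued fraction is sent to `0`; since division by zero yields `0`
in `RatFunc ℚ`, a final term `[a]_{q⁻¹} + q^{-a}/0⁻ = [a]_{q⁻¹}` comes out correctly.) -/
def qCF : Bool → List ℕ → RatFunc ℚ
  | _, [] => 0
  | true, a :: l => qNum a + RatFunc.X ^ a / qCF false l
  | false, a :: l => qNumInv a + (RatFunc.X)⁻¹ ^ a / qCF true l

/-- The Morier-Genoud--Ovsienko `q`-rational of `α > 1`, via the even-length
continued fraction expansion of `α`. -/
def qRatCF (α : ℚ) : RatFunc ℚ := qCF true (evenize (cfNat α.num.toNat α.den))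

/-- The Morier-Genoud--Ovsienko `q`-rational `[α]_q ∈ ℚ(q)`, for all `α ∈ ℚ`:
for `α > 1` it is given by the `q`-deformed continued fraction, and it is
extended to all of `ℚ` by the rule `[α-1]_q = ([α]_q - 1)/q`. -/
def qRat (α : ℚ) : RatFunc ℚ :=
  if 1 < α then qRatCF α
  else (qRatCF (α + (2 - ⌊α⌋).toNat) - qNum (2 - ⌊α⌋).toNat) / RatFunc.X ^ (2 - ⌊α⌋).toNat

/-- `{α}_q := [α+1]_q - [α]_q`, the substitute for `q^α`. -/
def qPow (α : ℚ) : RatFunc ℚ := qRat (α + 1) - qRat α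

/-- The `q`-factorial `[k]_q!`. -/
def qFact (k : ℕ) : RatFunc ℚ := ∏ i ∈ Finset.range k, qNum (i + 1)

/-- The `q`-binomial coefficient `binom(α,k)_q = [α]_q [α-1]_q ⋯ [α-k+1]_q / [k]_q!`. -/
def qBinom (α : ℚ) (k : ℕ) : RatFunc ℚ :=
  (∏ i ∈ Finset.range k, qRat (α - i)) / qFact k

/-- The Laurent-series expansion (at `q = 0`) of a rational function. -/
def lau (f : RatFunc ℚ) : LaurentSeries ℚ := ↑f

/-! ### Continued fractions -/

/-- The Euclidean expansion of a fraction greater than `1` has positive entries and a last entry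
at least `2`, so that `evenize` keeps the entries positive. -/
lemma cfNat_struct (q : ℕ) : ∀ p, 0 < q → q < p →
    ∃ l a, cfNat p q = l ++ [a + 2] ∧ ∀ x ∈ l, 0 < x := by
  induction q using Nat.strong_induction_on with
  | _ q ih =>
    intro p hq hp
    rw [cfNat, dif_neg hq.ne']
    by_cases hr : p % q = 0
    · obtain ⟨c, rfl⟩ := Nat.dvd_of_mod_eq_zero hr
      have hc : 2 ≤ c := by
        by_contra h
        have : c ≤ 1 := by omega
        nlinarith
      refine ⟨[], c - 2, ?_, by simp⟩
      rw [hr, cfNat, dif_pos rfl, Nat.mul_div_cancel_left _ hq]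
      simp; omega
    · obtain ⟨l, a, h, hl⟩ := ih (p % q) (Nat.mod_lt _ hq) q (Nat.pos_of_ne_zero hr)
        (Nat.mod_lt _ hq)
      refine ⟨(p / q) :: l, a, by simp [h], ?_⟩
      intro x hx
      rcases List.mem_cons.1 hx with rfl | hx
      · exact Nat.div_pos hp.le hq
      · exact hl x hx

lemma evenize_concat (l : List ℕ) (a : ℕ) : evenize (l ++ [a + 2]) = l ++ [a + 2] ∨
    evenize (l ++ [a + 2]) = l ++ [a + 1, 1] := by
  unfold evenize
  split_ifs
  · exact Or.inl rfl
  · right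
    have : (l ++ [a + 2]).getLast! = a + 2 := by
      rw [List.getLast!_eq_getLast?_getD]; simp
    rw [this]; simp

/-- The value of the ordinary continued fraction, with the same convention at `[]` as `qCF`. -/
def cfVal : List ℕ → ℚ
  | [] => 0
  | a :: l => a + 1 / cfVal l

lemma cfVal_split (l : List ℕ) (a : ℕ) : cfVal (l ++ [a + 2]) = cfVal (l ++ [a + 1, 1]) := by
  induction l with
  | nil => simp [cfVal]; ring
  | cons b l ih => simp only [List.cons_append, cfVal, ih]

lemma cfVal_cfNat (q : ℕ) : ∀ p, 0 < q → cfVal (cfNat p q) = (p : ℚ) / q := by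
  induction q using Nat.strong_induction_on with
  | _ q ih =>
    intro p hq
    have hq' : (q : ℚ) ≠ 0 := by exact_mod_cast hq.ne'
    have hdiv : (q : ℚ) * (p / q : ℕ) + (p % q : ℕ) = p := by
      exact_mod_cast Nat.div_add_mod p q
    rw [cfNat, dif_neg hq.ne', cfVal]
    by_cases hr : p % q = 0
    · rw [hr, cfNat, dif_pos rfl, cfVal]
      rw [hr] at hdiv
      field_simp
      push_cast at hdiv ⊢
      linarith
    · rw [ih _ (Nat.mod_lt _ hq) q (Nat.pos_of_ne_zero hr), one_div_div]
      field_simp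
      linarith

lemma cfVal_pos (l : List ℕ) (hl : ∀ x ∈ l, 0 < x) (hne : l ≠ []) : 0 < cfVal l := by
  induction l with
  | nil => exact absurd rfl hne
  | cons a l ih =>
    have ha : (0 : ℚ) < a := by exact_mod_cast hl a (by simp)
    have : 0 ≤ cfVal l := by
      rcases eq_or_ne l [] with rfl | h
      · simp [cfVal]
      · exact (ih (fun x hx => hl x (by simp [hx])) h).le
    rw [cfVal]
    positivity

/-! ### Specialisation at `q = 1` -/

/-- `Spec f a`: the rational function `f` is regular at `q = 1` with value `a`. It is witnessed by
a fraction, not necessarily reduced, whose denominator does not vanish at `1`. -/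
def Spec (f : RatFunc ℚ) (a : ℚ) : Prop :=
  ∃ p d : Polynomial ℚ, d.eval 1 ≠ 0 ∧
    f * algebraMap (Polynomial ℚ) (RatFunc ℚ) d = algebraMap (Polynomial ℚ) (RatFunc ℚ) p ∧
    p.eval 1 = a * d.eval 1

lemma Spec.add {f g : RatFunc ℚ} {a b : ℚ} (hf : Spec f a) (hg : Spec g b) :
    Spec (f + g) (a + b) := by
  obtain ⟨p, d, hd, h1, h2⟩ := hf
  obtain ⟨p', d', hd', h1', h2'⟩ := hg
  refine ⟨p * d' + p' * d, d * d', by simp [hd, hd'], ?_, ?_⟩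
  · simp only [map_add, map_mul, ← h1, ← h1']; ring
  · simp only [Polynomial.eval_add, Polynomial.eval_mul, h2, h2']; ring

lemma Spec.mul {f g : RatFunc ℚ} {a b : ℚ} (hf : Spec f a) (hg : Spec g b) :
    Spec (f * g) (a * b) := by
  obtain ⟨p, d, hd, h1, h2⟩ := hf
  obtain ⟨p', d', hd', h1', h2'⟩ := hg
  refine ⟨p * p', d * d', by simp [hd, hd'], ?_, ?_⟩
  · simp only [map_mul, ← h1, ← h1']; ring
  · simp only [Polynomial.eval_mul, h2, h2']; ring

lemma Spec.ne_zero {f : RatFunc ℚ} {a : ℚ} (hf : Spec f a) (ha : a ≠ 0) : f ≠ 0 := by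
  rintro rfl
  obtain ⟨p, d, hd, h1, h2⟩ := hf
  rw [zero_mul, eq_comm, map_eq_zero_iff _ (RatFunc.algebraMap_injective ℚ)] at h1
  subst h1
  simp [ha, hd] at h2

lemma Spec.inv {f : RatFunc ℚ} {a : ℚ} (hf : Spec f a) (ha : a ≠ 0) : Spec f⁻¹ a⁻¹ := by
  have h0 := hf.ne_zero ha
  obtain ⟨p, d, hd, h1, h2⟩ := hf
  refine ⟨d, p, by rw [h2]; exact mul_ne_zero ha hd, ?_, ?_⟩
  · rw [← h1, inv_mul_cancel_left₀ h0]
  · rw [h2, inv_mul_cancel_left₀ ha]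

lemma spec_poly (p : Polynomial ℚ) :
    Spec (algebraMap (Polynomial ℚ) (RatFunc ℚ) p) (p.eval 1) :=
  ⟨p, 1, by simp, by simp, by simp⟩

lemma spec_zero : Spec 0 0 := by simpa using spec_poly 0

lemma spec_one : Spec 1 1 := by simpa using spec_poly 1

lemma spec_X : Spec RatFunc.X 1 := by simpa using spec_poly Polynomial.X

lemma Spec.neg {f : RatFunc ℚ} {a : ℚ} (hf : Spec f a) : Spec (-f) (-a) := by
  simpa using (spec_poly (-1)).mul hf

lemma Spec.pow_one {f : RatFunc ℚ} (hf : Spec f 1) (n : ℕ) : Spec (f ^ n) 1 := by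
  induction n with
  | zero => simpa using spec_one
  | succ n ih => simpa [pow_succ] using ih.mul hf

lemma spec_geom {f : RatFunc ℚ} (hf : Spec f 1) (n : ℕ) :
    Spec (∑ i ∈ Finset.range n, f ^ i) n := by
  induction n with
  | zero => simpa using spec_zero
  | succ n ih =>
    rw [Finset.sum_range_succ]
    push_cast
    exact ih.add (hf.pow_one n)

lemma spec_X_inv : Spec (RatFunc.X)⁻¹ 1 := by simpa using spec_X.inv one_ne_zero

lemma spec_qCF (l : List ℕ) (hl : ∀ x ∈ l, 0 < x) : ∀ b, Spec (qCF b l) (cfVal l) := by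
  induction l with
  | nil => intro b; simpa [qCF, cfVal] using spec_zero
  | cons a l ih =>
    have hl' : ∀ x ∈ l, 0 < x := fun x hx => hl x (by simp [hx])
    -- For `l = []` both sides use the convention that the inverse of zero is zero.
    have hinv : ∀ b, Spec (qCF b l)⁻¹ (cfVal l)⁻¹ := by
      intro b
      rcases eq_or_ne l [] with rfl | h
      · simpa [qCF, cfVal] using spec_zero
      · exact (ih hl' b).inv (cfVal_pos l hl' h).ne'
    intro b
    cases b
    · simpa [qCF, cfVal, div_eq_mul_inv, qNumInv] using
        (spec_geom spec_X_inv a).add ((spec_X_inv.pow_one a).mul (hinv true))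
    · simpa [qCF, cfVal, div_eq_mul_inv, qNum] using
        (spec_geom spec_X a).add ((spec_X.pow_one a).mul (hinv false))

lemma num_toNat_gt {α : ℚ} (h : 1 < α) : α.den < α.num.toNat := by
  have h1 : (α.den : ℤ) < α.num := by
    have := Rat.lt_iff 1 α
    simp at this
    exact this.1 h
  omega

lemma spec_qRatCF {α : ℚ} (h : 1 < α) : Spec (qRatCF α) α := by
  obtain ⟨l, a, e, hl⟩ := cfNat_struct α.den α.num.toNat α.den_pos (num_toNat_gt h)
  have hv : cfVal (l ++ [a + 2]) = α := by
    rw [← e, cfVal_cfNat _ _ α.den_pos]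
    have h0 : 0 ≤ α.num := Rat.num_nonneg.2 (by linarith)
    have : ((α.num.toNat : ℕ) : ℚ) = (α.num : ℚ) := by exact_mod_cast Int.toNat_of_nonneg h0
    rw [this, Rat.num_div_den]
  unfold qRatCF
  rw [e]
  rcases evenize_concat l a with h' | h' <;> rw [h']
  · have := spec_qCF (l ++ [a + 2]) (by
      intro x hx
      simp only [List.mem_append, List.mem_singleton] at hx
      rcases hx with hx | rfl
      · exact hl x hx
      · omega) true
    rwa [hv] at this
  · have := spec_qCF (l ++ [a + 1, 1]) (by
      intro x hx
      simp only [List.mem_append, List.mem_cons, List.not_mem_nil, or_false] at hx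
      rcases hx with hx | rfl | rfl
      · exact hl x hx
      · omega
      · omega) true
    rwa [← cfVal_split, hv] at this

/-! ### The shift rule -/

lemma X_ne : (RatFunc.X : RatFunc ℚ) ≠ 0 := RatFunc.X_ne_zero

lemma qNum_succ (n : ℕ) : qNum (n + 1) = qNum n + RatFunc.X ^ n := by
  simp [qNum, Finset.sum_range_succ]

lemma qNum_succ' (n : ℕ) : qNum (n + 1) = 1 + RatFunc.X * qNum n := by
  simp only [qNum, Finset.sum_range_succ', Finset.mul_sum, pow_succ', pow_zero]
  ring

lemma qCF_head_succ (a : ℕ) (l : List ℕ) :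
    qCF true ((a + 1) :: l) = 1 + RatFunc.X * qCF true (a :: l) := by
  simp only [qCF, qNum_succ', pow_succ']
  ring

lemma evenize_head_succ (a : ℕ) (l : List ℕ) : ∃ b m,
    evenize ((a + 1) :: l) = b :: m ∧ evenize ((a + 2) :: l) = (b + 1) :: m := by
  unfold evenize
  by_cases h : (l.length + 1) % 2 = 0
  · exact ⟨a + 1, l, by simp [h], by simp [h]⟩
  · rcases l with _ | ⟨c, l⟩
    · exact ⟨a, [1], by simp [List.getLast!], by simp [List.getLast!]⟩
    · refine ⟨a + 1, (c :: l).dropLast ++ [(c :: l).getLast! - 1, 1], ?_, ?_⟩ <;>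
        · rw [if_neg (by simpa using h)]
          simp [List.getLast!]

lemma qRatCF_add_one {α : ℚ} (h : 1 < α) : qRatCF (α + 1) = 1 + RatFunc.X * qRatCF α := by
  have hd : (α + 1).den = α.den := by simp
  have hn : (α + 1).num = α.num + α.den := by
    have h1 : ((α + 1).num : ℚ) / α.den = α + 1 := by
      rw [← hd]; exact Rat.num_div_den _
    have h2 : (α.num : ℚ) / α.den = α := Rat.num_div_den _
    have h3 : (α.den : ℚ) ≠ 0 := by exact_mod_cast α.den_ne_zero
    rw [div_eq_iff h3] at h1 h2
    have : ((α + 1).num : ℚ) = α.num + α.den := by rw [h1, h2]; ring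
    exact_mod_cast this
  have hgt := num_toNat_gt h
  have hn' : (α + 1).num.toNat = α.num.toNat + α.den := by
    rw [hn]; omega
  have hpos := α.den_pos
  unfold qRatCF
  rw [hd, hn', cfNat, dif_neg hpos.ne', cfNat.eq_def α.num.toNat, dif_neg hpos.ne',
    Nat.add_div_right _ hpos, Nat.add_mod_right]
  obtain ⟨a, ha⟩ : ∃ a, α.num.toNat / α.den = a + 1 :=
    ⟨_, (Nat.succ_pred_eq_of_pos (Nat.div_pos hgt.le hpos)).symm⟩
  rw [ha]
  obtain ⟨b, m, h1, h2⟩ := evenize_head_succ a (cfNat α.den (α.num.toNat % α.den))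
  rw [h1, show a + 1 + 1 = a + 2 from rfl, h2, qCF_head_succ]

lemma qRatCF_add_nat {α : ℚ} (h : 1 < α) (n : ℕ) :
    qRatCF (α + n) = qNum n + RatFunc.X ^ n * qRatCF α := by
  induction n with
  | zero => simp [qNum]
  | succ n ih =>
    have hn : (0 : ℚ) ≤ n := n.cast_nonneg
    rw [Nat.cast_succ, ← add_assoc, qRatCF_add_one (by linarith), ih, qNum_succ']
    ring

/-- The value of the translate-and-untranslate formula does not depend on the translation. -/
lemma shift_indep {α : ℚ} {m n : ℕ} (hm : 1 < α + m) (hmn : m ≤ n) :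
    (qRatCF (α + m) - qNum m) / RatFunc.X ^ m = (qRatCF (α + n) - qNum n) / RatFunc.X ^ n := by
  have hX := X_ne
  induction n, hmn using Nat.le_induction with
  | base => rfl
  | succ n hmn ih =>
    have : (m : ℚ) ≤ n := by exact_mod_cast hmn
    rw [ih, Nat.cast_succ, ← add_assoc, qRatCF_add_one (by linarith), qNum_succ', pow_succ]
    field_simp
    ring

lemma qRat_eq {α : ℚ} {n : ℕ} (hn : 1 < α + n) :
    qRat α = (qRatCF (α + n) - qNum n) / RatFunc.X ^ n := by
  have hX := X_ne
  unfold qRat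
  split_ifs with h
  · rw [qRatCF_add_nat h]
    field_simp
    ring
  · have hm : 1 < α + (2 - ⌊α⌋).toNat := by
      have h1 : (2 - ⌊α⌋ : ℤ) ≤ ((2 - ⌊α⌋).toNat : ℤ) := Int.self_le_toNat _
      have h2 : (2 - ⌊α⌋ : ℚ) ≤ ((2 - ⌊α⌋).toNat : ℚ) := by exact_mod_cast h1
      have := Int.floor_le α
      linarith
    rcases le_total (2 - ⌊α⌋).toNat n with hle | hle
    · exact shift_indep hm hle
    · exact (shift_indep hn hle).symm

lemma exists_shift (α : ℚ) : ∃ n : ℕ, 1 < α + n := by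
  obtain ⟨n, hn⟩ := exists_nat_gt (1 - α)
  exact ⟨n, by linarith⟩

lemma qRat_add_one (α : ℚ) : qRat (α + 1) = 1 + RatFunc.X * qRat α := by
  have hX := X_ne
  obtain ⟨n, hn⟩ := exists_shift α
  have h1 : α + ((n + 1 : ℕ) : ℚ) = α + 1 + n := by push_cast; ring
  rw [qRat_eq (α := α) (n := n + 1) (by rw [h1]; linarith),
    qRat_eq (α := α + 1) (n := n) (by linarith), h1, qNum_succ, pow_succ]
  field_simp
  ring

lemma qRat_spec (α : ℚ) : Spec (qRat α) α := by
  obtain ⟨n, hn⟩ := exists_shift α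
  rw [qRat_eq hn]
  simpa [div_eq_mul_inv, sub_eq_add_neg, qNum] using
    ((spec_qRatCF hn).add (spec_geom spec_X n).neg).mul
      ((spec_X.pow_one n).inv one_ne_zero)

/-! ### The `q`-Pascal identity -/

lemma qNum_ne_zero (n : ℕ) : qNum (n + 1) ≠ 0 :=
  (spec_geom spec_X (n + 1)).ne_zero (by exact_mod_cast n.succ_ne_zero)

lemma qNum_mul (n : ℕ) : (1 - RatFunc.X) * qNum n = 1 - RatFunc.X ^ n :=
  mul_neg_geom_sum _ n

lemma one_sub_qPow (α : ℚ) : 1 - qPow α = (1 - RatFunc.X) * qRat α := by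
  rw [qPow, qRat_add_one]; ring

lemma one_sub_X_ne : (1 - RatFunc.X : RatFunc ℚ) ≠ 0 := by
  rw [← RatFunc.algebraMap_X, ← map_one (algebraMap (Polynomial ℚ) (RatFunc ℚ)), ← map_sub]
  intro h
  rw [map_eq_zero_iff _ (RatFunc.algebraMap_injective ℚ)] at h
  simpa using congrArg (Polynomial.eval 0) h

lemma qRat_mul_prod (α : ℚ) (k : ℕ) :
    qRat α * ∏ i ∈ Finset.range k, qRat (α - 1 - i) =
      ∏ i ∈ Finset.range (k + 1), qRat (α - i) := by
  rw [Finset.prod_range_succ']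
  have : ∀ i : ℕ, α - ((i + 1 : ℕ) : ℚ) = α - 1 - i := fun i => by push_cast; ring
  simp only [this, Nat.cast_zero, sub_zero]
  ring

/-- `[α]_q binom(α-1,k)_q = [α-k]_q binom(α,k)_q`. -/
lemma qRat_mul_qBinom (α : ℚ) (k : ℕ) :
    qRat α * qBinom (α - 1) k = qRat (α - k) * qBinom α k := by
  simp only [qBinom, ← mul_div_assoc, qRat_mul_prod, Finset.prod_range_succ]
  ring

/-- `[α]_q binom(α-1,k)_q = [k+1]_q binom(α,k+1)_q`. -/
lemma qRat_mul_qBinom' (α : ℚ) (k : ℕ) :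
    qRat α * qBinom (α - 1) k = qNum (k + 1) * qBinom α (k + 1) := by
  have h := qNum_ne_zero k
  have hf : qFact (k + 1) = qFact k * qNum (k + 1) := Finset.prod_range_succ _ _
  rw [qBinom, qBinom, ← mul_div_assoc, qRat_mul_prod, hf, mul_comm (qFact k), ← mul_div_assoc,
    mul_div_mul_left _ _ h]

/-- Another `q`-Pascal identity:
`(1-{α}_q)(binom(α-1,k)_q + binom(α-1,k-1)_q) = (2 - q^k - {α-k}_q)·binom(α,k)_q`;
equivalently, when `α ≠ 0`,
`binom(α-1,k)_q + binom(α-1,k-1)_q = ((2 - q^k - {α-k}_q)/(1-{α}_q))·binom(α,k)_q`. -/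
theorem qBinom_other_pascal (α : ℚ) (k : ℕ) (hk : 1 ≤ k) :
    (1 - qPow α) * (qBinom (α - 1) k + qBinom (α - 1) (k - 1))
        = (2 - RatFunc.X ^ k - qPow (α - k)) * qBinom α k ∧
    (α ≠ 0 → qBinom (α - 1) k + qBinom (α - 1) (k - 1)
        = ((2 - RatFunc.X ^ k - qPow (α - k)) / (1 - qPow α)) * qBinom α k) := by
  have key : (1 - qPow α) * (qBinom (α - 1) k + qBinom (α - 1) (k - 1))
      = (2 - RatFunc.X ^ k - qPow (α - k)) * qBinom α k := by
    obtain ⟨k, rfl⟩ : ∃ j, k = j + 1 := ⟨k - 1, by omega⟩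
    have h1 := qRat_mul_qBinom α (k + 1)
    have h2 := qRat_mul_qBinom' α k
    have h3 := qNum_mul (k + 1)
    have h4 := one_sub_qPow (α - (k + 1 : ℕ))
    rw [one_sub_qPow, Nat.add_sub_cancel]
    linear_combination (1 - RatFunc.X) * h1 + (1 - RatFunc.X) * h2 +
      qBinom α (k + 1) * h3 - qBinom α (k + 1) * h4
  refine ⟨key, fun hα => ?_⟩
  have h : 1 - qPow α ≠ 0 := by
    rw [one_sub_qPow]
    exact mul_ne_zero one_sub_X_ne ((qRat_spec α).ne_zero hα)
  rw [div_mul_eq_mul_div, eq_div_iff h, mul_comm, key]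

end
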